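/- arXiv:0908.1328 — 2 statements merged into one kernel-verified Lean document; each statement's English description precedes it below -/
import Mathlib

section
/- For all natural numbers n ≥ 1 and real parameters a, b, x (with nonzero denominators), the derivatives of the monic Jacobi polynomials satisfy x·(P_n^{(a,b)})'(x) = (n/(n+1))·(P_{n+1}^{(a,b)})'(x) − ((a+2+b)(a−b)/((2n+2+a+b)(2n+a+b)))·(P_n^{(a,b)})'(x) + (4n(b+n)(a+n)(n+a+b+1)/((2n+a+b+1)(2n+a+b−1)(2n+a+b)²))·(P_{n-1}^{(a,b)})'(x). -/
/-- Rising factorial `(a)_k = a(a+1)⋯(a+k-1)`. -/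
noncomputable def rf (a : ℝ) (k : ℕ) : ℝ := ∏ j ∈ Finset.range k, (a + j)

/-- Monic Jacobi polynomials
`P_n^{(a,b)}(x) = ((a+1)_n 2^n / (n+a+b+1)_n) ∑_{k=0}^n
  ((-n)_k (n+a+b+1)_k / ((a+1)_k k!)) ((1-x)/2)^k`. -/
noncomputable def jacobi (a b : ℝ) (n : ℕ) (x : ℝ) : ℝ :=
  rf (a + 1) n * 2 ^ n / rf ((n : ℝ) + a + b + 1) n *
    ∑ k ∈ Finset.range (n + 1),
      rf (-(n : ℝ)) k * rf ((n : ℝ) + a + b + 1) k / (rf (a + 1) k * (k.factorial : ℝ)) *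
        ((1 - x) / 2) ^ k

/-- Derivative of the monic Jacobi polynomial with respect to `x`. -/
noncomputable def jacobiDeriv (a b : ℝ) (n : ℕ) (x : ℝ) : ℝ := deriv (jacobi a b n) x

lemma rf_succ (a : ℝ) (k : ℕ) : rf a (k + 1) = rf a k * (a + k) := by
  simp [rf, Finset.prod_range_succ]

lemma rf_succ_left (a : ℝ) (k : ℕ) : rf a (k + 1) = a * rf (a + 1) k := by
  simp only [rf, Finset.prod_range_succ', Nat.cast_zero, add_zero, mul_comm a]
  congr 1
  refine Finset.prod_congr rfl fun i _ => ?_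
  push_cast
  ring

lemma mul_rf_add_one (a : ℝ) (k : ℕ) : a * rf (a + 1) k = rf a k * (a + k) := by
  rw [← rf_succ_left, rf_succ]

lemma rf_neg_natCast_eq_zero {n k : ℕ} (h : n < k) : rf (-(n : ℝ)) k = 0 :=
  Finset.prod_eq_zero (Finset.mem_range.2 h) (by simp)

/-- Normalising factor `(a+1)_n 2^n / (n+a+b+1)_n` of the monic Jacobi polynomial. -/
noncomputable def jacobiLead (a b : ℝ) (n : ℕ) : ℝ :=
  rf (a + 1) n * 2 ^ n / rf ((n : ℝ) + a + b + 1) n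

/-- Coefficient of `((1-x)/2)^k` in the monic Jacobi polynomial. -/
noncomputable def jacobiCoeff (a b : ℝ) (n k : ℕ) : ℝ :=
  jacobiLead a b n *
    (rf (-(n : ℝ)) k * rf ((n : ℝ) + a + b + 1) k / (rf (a + 1) k * (k.factorial : ℝ)))

lemma jacobi_eq_sum (a b : ℝ) (n : ℕ) (x : ℝ) :
    jacobi a b n x = ∑ k ∈ Finset.range (n + 1), jacobiCoeff a b n k * ((1 - x) / 2) ^ k := by
  simp only [jacobi, jacobiCoeff, jacobiLead, Finset.mul_sum, mul_assoc]

lemma jacobiCoeff_eq_zero (a b : ℝ) {n k : ℕ} (h : n < k) : jacobiCoeff a b n k = 0 := by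
  simp [jacobiCoeff, rf_neg_natCast_eq_zero h]

lemma jacobiDeriv_eq_sum (a b : ℝ) {n N : ℕ} (h : n ≤ N) (x : ℝ) :
    jacobiDeriv a b n x =
      -(1 / 2) * ∑ j ∈ Finset.range N,
        ((j : ℝ) + 1) * jacobiCoeff a b n (j + 1) * ((1 - x) / 2) ^ j := by
  have hy : HasDerivAt (fun x : ℝ => (1 - x) / 2) (-1 / 2) x :=
    ((hasDerivAt_id x).const_sub 1).div_const 2
  have hs : HasDerivAt (fun x => ∑ k ∈ Finset.range (N + 1),
      jacobiCoeff a b n k * ((1 - x) / 2) ^ k)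
      (∑ k ∈ Finset.range (N + 1),
        jacobiCoeff a b n k * (k * ((1 - x) / 2) ^ (k - 1) * (-1 / 2))) x :=
    HasDerivAt.fun_sum fun k _ => (hy.fun_pow k).const_mul _
  have hf : jacobi a b n =
      fun x => ∑ k ∈ Finset.range (N + 1), jacobiCoeff a b n k * ((1 - x) / 2) ^ k := by
    funext x
    rw [jacobi_eq_sum]
    refine Finset.sum_subset (Finset.range_mono (by omega)) fun k _ hk => ?_
    rw [jacobiCoeff_eq_zero a b (by simpa using hk), zero_mul]
  rw [jacobiDeriv, hf, hs.deriv, Finset.sum_range_succ', Finset.mul_sum]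
  simp only [Nat.cast_zero, zero_mul, mul_zero, add_zero]
  refine Finset.sum_congr rfl fun j _ => ?_
  push_cast
  ring

lemma jacobiLead_succ (a b : ℝ) (n : ℕ)
    (h0 : rf ((n : ℝ) + a + b + 1) n ≠ 0)
    (h1 : rf (((n + 1 : ℕ) : ℝ) + a + b + 1) (n + 1) ≠ 0) :
    jacobiLead a b (n + 1) * ((2 * n + a + b + 1) * (2 * n + a + b + 2)) =
      jacobiLead a b n * (2 * (a + 1 + n) * (n + a + b + 1)) := by
  have key : ((n : ℝ) + a + b + 1) * rf (((n + 1 : ℕ) : ℝ) + a + b + 1) (n + 1) =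
      rf ((n : ℝ) + a + b + 1) n * ((2 * n + a + b + 1) * (2 * n + a + b + 2)) := by
    rw [show (((n + 1 : ℕ) : ℝ) + a + b + 1) = ((n : ℝ) + a + b + 1) + 1 by push_cast; ring,
      mul_rf_add_one, rf_succ]
    push_cast
    ring
  unfold jacobiLead
  rw [rf_succ (a + 1), pow_succ, div_mul_eq_mul_div, div_mul_eq_mul_div, div_eq_div_iff h1 h0]
  linear_combination (-2 * rf (a + 1) n * 2 ^ n * (a + 1 + n)) * key

section CoeffRatios

variable (a b : ℝ) (n j : ℕ)

lemma jacobiCoeff_succ_right (ha : a + 1 + j ≠ 0) :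
    ((j : ℝ) + 1) * jacobiCoeff a b n (j + 1) =
      jacobiCoeff a b n j * ((j - n) * (n + a + b + 1 + j) / (a + 1 + j)) := by
  have hj : (j : ℝ) + 1 ≠ 0 := by positivity
  unfold jacobiCoeff
  simp only [rf_succ, Nat.factorial_succ]
  push_cast
  by_cases hr : rf (a + 1) j = 0
  · simp [hr]
  have hf : (j.factorial : ℝ) ≠ 0 := by positivity
  field_simp
  ring

lemma jacobiCoeff_succ_succ (ha : a + 1 + j ≠ 0)
    (h0 : rf ((n : ℝ) + a + b + 1) n ≠ 0)
    (h1 : rf (((n + 1 : ℕ) : ℝ) + a + b + 1) (n + 1) ≠ 0)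
    (h2 : 2 * (n : ℝ) + a + b + 1 ≠ 0) (h3 : 2 * (n : ℝ) + a + b + 2 ≠ 0)
    (h4 : (n : ℝ) + a + b + 1 ≠ 0) :
    ((j : ℝ) + 1) * jacobiCoeff a b (n + 1) (j + 1) =
      jacobiCoeff a b n j * (-(2 * (a + 1 + n) * (n + 1) * (n + a + b + 1 + j) *
        (n + a + b + 2 + j)) / ((2 * n + a + b + 1) * (2 * n + a + b + 2) * (a + 1 + j))) := by
  have hj : (j : ℝ) + 1 ≠ 0 := by positivity
  have hf : (j.factorial : ℝ) ≠ 0 := by positivity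
  have hL := jacobiLead_succ a b n h0 h1
  have hL' : jacobiLead a b (n + 1) = jacobiLead a b n * (2 * (a + 1 + n) * (n + a + b + 1)) /
      ((2 * n + a + b + 1) * (2 * n + a + b + 2)) :=
    eq_div_of_mul_eq (mul_ne_zero h2 h3) hL
  have hv : rf (-((n + 1 : ℕ) : ℝ)) (j + 1) = -((n : ℝ) + 1) * rf (-(n : ℝ)) j := by
    rw [rf_succ_left]
    push_cast
    ring_nf
  have hw : rf (((n + 1 : ℕ) : ℝ) + a + b + 1) (j + 1) =
      rf ((n : ℝ) + a + b + 1) j * (n + a + b + 1 + j) * (n + a + b + 2 + j) /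
        (n + a + b + 1) := by
    rw [eq_div_iff h4, mul_comm,
      show (((n + 1 : ℕ) : ℝ) + a + b + 1) = ((n : ℝ) + a + b + 1) + 1 by push_cast; ring,
      mul_rf_add_one, rf_succ]
    push_cast
    ring
  unfold jacobiCoeff
  rw [hL', hv, hw, rf_succ (a + 1), Nat.factorial_succ]
  push_cast
  by_cases hr : rf (a + 1) j = 0
  · simp [hr]
  field_simp

lemma jacobiCoeff_pred_succ (ha : a + 1 + j ≠ 0) (han : a + 1 + n ≠ 0)
    (h0 : rf ((n : ℝ) + a + b + 1) n ≠ 0)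
    (h1 : rf (((n + 1 : ℕ) : ℝ) + a + b + 1) (n + 1) ≠ 0) :
    ((j : ℝ) + 1) * jacobiCoeff a b n (j + 1) =
      jacobiCoeff a b (n + 1) j * (-((j - (n + 1)) * (j - n) *
        ((2 * n + a + b + 1) * (2 * n + a + b + 2))) /
          (2 * (a + 1 + n) * (n + 1) * (a + 1 + j))) := by
  have hj : (j : ℝ) + 1 ≠ 0 := by positivity
  have hn : (n : ℝ) + 1 ≠ 0 := by positivity
  have hf : (j.factorial : ℝ) ≠ 0 := by positivity
  have hL := jacobiLead_succ a b n h0 h1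
  have hL' : jacobiLead a b n * (n + a + b + 1) = jacobiLead a b (n + 1) *
      ((2 * n + a + b + 1) * (2 * n + a + b + 2)) / (2 * (a + 1 + n)) := by
    rw [eq_div_iff (mul_ne_zero two_ne_zero han)]
    linear_combination -hL
  have hv : rf (-(n : ℝ)) (j + 1) =
      -(rf (-((n + 1 : ℕ) : ℝ)) j * (j - (n + 1)) * (j - n)) / (n + 1) := by
    have h := mul_rf_add_one (-((n + 1 : ℕ) : ℝ)) j
    rw [show -((n + 1 : ℕ) : ℝ) + 1 = -(n : ℝ) by push_cast; ring] at h
    rw [eq_div_iff hn, rf_succ]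
    push_cast at h ⊢
    linear_combination (-(j - n : ℝ)) * h
  have hw : rf ((n : ℝ) + a + b + 1) (j + 1) =
      (n + a + b + 1) * rf (((n + 1 : ℕ) : ℝ) + a + b + 1) j := by
    rw [rf_succ_left]
    push_cast
    ring_nf
  have hc : jacobiCoeff a b n (j + 1) = (jacobiLead a b n * (n + a + b + 1)) *
      (rf (-(n : ℝ)) (j + 1) * rf (((n + 1 : ℕ) : ℝ) + a + b + 1) j /
        (rf (a + 1) (j + 1) * ((j + 1).factorial : ℝ))) := by
    rw [jacobiCoeff, hw]
    ring
  rw [hc, hL', hv, rf_succ (a + 1), Nat.factorial_succ, jacobiCoeff]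
  push_cast
  by_cases hr : rf (a + 1) j = 0
  · simp [hr]
  field_simp

end CoeffRatios

lemma coeff_identity_of_ratios (a b r t T : ℝ) (ht : a + 1 + t ≠ 0) (hr : a + 1 + r ≠ 0)
    (h1 : 2 * r + a + b + 1 ≠ 0) (h2 : 2 * r + a + b + 2 ≠ 0) (h3 : 2 * r + a + b + 3 ≠ 0)
    (h4 : 2 * r + a + b + 4 ≠ 0) (hr1 : r + 1 ≠ 0) (hr2 : r + 1 + 1 ≠ 0) :
    T * ((t - (r + 1)) * (r + 1 + a + b + 1 + t) / (a + 1 + t)) - 2 * t * T =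
      (r + 1) / (r + 1 + 1) * (T * (-(2 * (a + 1 + (r + 1)) * (r + 1 + 1) *
        (r + 1 + a + b + 1 + t) * (r + 1 + a + b + 2 + t)) /
          ((2 * r + a + b + 3) * (2 * r + a + b + 4) * (a + 1 + t)))) -
      (a + 2 + b) * (a - b) / ((2 * r + a + b + 4) * (2 * r + a + b + 2)) *
        (T * ((t - (r + 1)) * (r + 1 + a + b + 1 + t) / (a + 1 + t))) +
      4 * (r + 1) * (b + (r + 1)) * (a + (r + 1)) * (r + 1 + a + b + 1) /
        ((2 * r + a + b + 3) * (2 * r + a + b + 1) * (2 * r + a + b + 2) ^ 2) *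
        (T * (-((t - (r + 1)) * (t - r) * ((2 * r + a + b + 1) * (2 * r + a + b + 2))) /
          (2 * (a + 1 + r) * (r + 1) * (a + 1 + t)))) := by
  generalize hu : a + 1 + t = u at *
  generalize hv : a + 1 + r = v at *
  generalize hp1 : 2 * r + a + b + 1 = p1 at *
  generalize hp2 : 2 * r + a + b + 2 = p2 at *
  generalize hp3 : 2 * r + a + b + 3 = p3 at *
  generalize hp4 : 2 * r + a + b + 4 = p4 at *
  generalize hq' : r + 1 + 1 = q' at *
  generalize hq : r + 1 = q at *
  field_simp
  subst hp1 hp2 hp3 hp4 hq' hq hu hv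
  ring

lemma add_ne_zero_of_rf_ne_zero {a : ℝ} {k j : ℕ} (h : rf a k ≠ 0) (hj : j < k) :
    a + j ≠ 0 :=
  Finset.prod_ne_zero_iff.1 h j (Finset.mem_range.2 hj)

lemma mul_sum_deriv_coeff (c : ℕ → ℝ) (n : ℕ) (hc : c (n + 1) = 0) (y : ℝ) :
    (1 - 2 * y) * ∑ j ∈ Finset.range (n + 1), ((j : ℝ) + 1) * c (j + 1) * y ^ j =
      ∑ j ∈ Finset.range (n + 1), (((j : ℝ) + 1) * c (j + 1) - 2 * j * c j) * y ^ j := by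
  have h : y * ∑ j ∈ Finset.range (n + 1), ((j : ℝ) + 1) * c (j + 1) * y ^ j =
      ∑ j ∈ Finset.range (n + 1), (j : ℝ) * c j * y ^ j := by
    rw [Finset.sum_range_succ, hc, Finset.sum_range_succ', mul_zero, zero_mul, add_zero,
      Nat.cast_zero, zero_mul, zero_mul, add_zero, Finset.mul_sum]
    refine Finset.sum_congr rfl fun j _ => ?_
    push_cast
    ring
  simp only [sub_mul, Finset.sum_sub_distrib, one_mul, mul_assoc] at h ⊢
  rw [h, Finset.mul_sum]

theorem jacobi_deriv_three_term (n : ℕ) (hn : 1 ≤ n) (a b x : ℝ)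
    (hpoch1 : ∀ k ≤ n + 1, rf (a + 1) k ≠ 0)
    (hpoch2 : ∀ m ≤ n + 1, rf ((m : ℝ) + a + b + 1) m ≠ 0)
    (h1 : 2 * (n : ℝ) + a + b ≠ 0) (h2 : 2 * (n : ℝ) + a + b + 1 ≠ 0)
    (h3 : 2 * (n : ℝ) + a + b - 1 ≠ 0) (h4 : 2 * (n : ℝ) + 2 + a + b ≠ 0) :
    x * jacobiDeriv a b n x =
      ((n : ℝ) / (n + 1)) * jacobiDeriv a b (n + 1) x -
        ((a + 2 + b) * (a - b) / ((2 * n + 2 + a + b) * (2 * n + a + b))) *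
          jacobiDeriv a b n x +
        (4 * n * (b + n) * (a + n) * (n + a + b + 1) /
            ((2 * n + a + b + 1) * (2 * n + a + b - 1) * (2 * n + a + b) ^ 2)) *
          jacobiDeriv a b (n - 1) x := by
  obtain ⟨m, rfl⟩ : ∃ m, n = m + 1 := ⟨n - 1, by omega⟩
  rw [Nat.add_sub_cancel, jacobiDeriv_eq_sum a b (Nat.le_succ (m + 1)),
    jacobiDeriv_eq_sum a b (le_refl (m + 1 + 1)),
    jacobiDeriv_eq_sum a b (show m ≤ m + 1 + 1 by omega)]
  set y := (1 - x) / 2 with hy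
  have hx : x = 1 - 2 * y := by rw [hy]; ring
  have hmul := mul_sum_deriv_coeff (jacobiCoeff a b (m + 1)) (m + 1)
    (jacobiCoeff_eq_zero a b (Nat.lt_succ_self _)) y
  rw [hx, mul_left_comm, hmul]
  simp only [mul_left_comm _ (-(1 / 2) : ℝ)]
  rw [← mul_sub, ← mul_add]
  congr 1
  rw [Finset.mul_sum, Finset.mul_sum, Finset.mul_sum, ← Finset.sum_sub_distrib,
    ← Finset.sum_add_distrib]
  refine Finset.sum_congr rfl fun j hj => ?_
  have ha : ∀ i ≤ m + 1, a + 1 + (i : ℝ) ≠ 0 := fun i hi =>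
    add_ne_zero_of_rf_ne_zero (hpoch1 _ le_rfl) (by omega)
  have haj := ha j (by simpa [Nat.lt_succ_iff] using hj)
  have ham := ha m (by omega)
  have hpm := hpoch2 m (by omega)
  have hpm1 := hpoch2 (m + 1) (by omega)
  have hpm2 := hpoch2 (m + 1 + 1) le_rfl
  have hs := add_ne_zero_of_rf_ne_zero hpm1 (Nat.succ_pos m)
  push_cast at h1 h2 h3 h4 hs
  have e1 := jacobiCoeff_succ_right a b (m + 1) j haj
  have e2 := jacobiCoeff_succ_succ a b (m + 1) j haj hpm1 hpm2 (by push_cast; exact h2)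
    (by push_cast; convert h4 using 1; ring) (by push_cast; simpa using hs)
  have e3 := jacobiCoeff_pred_succ a b m j haj ham hpm hpm1
  push_cast at e1 e2 e3 ⊢
  simp only [← mul_assoc]
  rw [← sub_mul, ← add_mul]
  congr 1
  rw [mul_assoc _ ((j : ℝ) + 1), mul_assoc _ ((j : ℝ) + 1), mul_assoc _ ((j : ℝ) + 1),
    e1, e2, e3]
  have k3 : 2 * (m : ℝ) + a + b + 1 ≠ 0 := by convert h3 using 1; ring
  have k4 : 2 * (m : ℝ) + a + b + 2 ≠ 0 := by convert h1 using 1; ring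
  have k5 : 2 * (m : ℝ) + a + b + 3 ≠ 0 := by convert h2 using 1; ring
  have k6 : 2 * (m : ℝ) + a + b + 4 ≠ 0 := by convert h4 using 1; ring
  have km : (m : ℝ) + 1 ≠ 0 := by positivity
  have km2 : (m : ℝ) + 1 + 1 ≠ 0 := by positivity
  rw [show 2 * ((m : ℝ) + 1) + a + b - 1 = 2 * m + a + b + 1 by ring,
    show 2 * ((m : ℝ) + 1) + a + b + 1 = 2 * m + a + b + 3 by ring,
    show 2 * ((m : ℝ) + 1) + a + b + 2 = 2 * m + a + b + 4 by ring,
    show 2 * ((m : ℝ) + 1) + 2 + a + b = 2 * m + a + b + 4 by ring,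
    show 2 * ((m : ℝ) + 1) + a + b = 2 * m + a + b + 2 by ring]
  exact coeff_identity_of_ratios _ _ _ _ _ haj ham k3 k4 k5 k6 km km2
end

section
/- For all natural numbers n ≥ 1 and real (or complex) parameters q, a, b, c, d with all stated denominators nonzero, the q-Racah polynomials R_n(μ(x)) with μ(x) = q^{−x} + c d q^{x+1} satisfy μ(x)·R_n(μ(x)) = α_n·R_{n+1}(μ(x)) + β_n·R_n(μ(x)) + γ_n·R_{n-1}(μ(x)), where α_n = (1−aq^{n+1})(1−abq^{n+1})(1−bdq^{n+1})(1−cq^{n+1})/((1−abq^{2n+1})(1−abq^{2n+2})), γ_n = q(1−q^n)(1−bq^n)(c−abq^n)(d−aq^n)/((1−abq^{2n})(1−abq^{2n+1})), and β_n = q^{n+1}(abq^{2n+1}+1)(c+bcd+dc+a+bd+ab+ca+abd)/((1−abq^{2n})(1−abq^{2n+2})) − q^{2n+1}(1+q)(ab²d+abcd+ca+bcd+abd+ab+abc+a²b)/((1−abq^{2n})(1−abq^{2n+2})). -/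
/-- The q-shifted factorial `(a;q)_k = ∏_{j=0}^{k-1}(1 - a q^j)`. -/
noncomputable def qpoch (a q : ℝ) (k : ℕ) : ℝ := ∏ j ∈ Finset.range k, (1 - a * q ^ j)

/-- The q-Racah polynomials `R_n(μ(x))` with `μ(x) = q^{-x} + cd q^{x+1}` (real `x`, `q > 0`):
`R_n(μ(x)) = ∑_{k=0}^n ((q^{-n};q)_k (abq^{n+1};q)_k (q^{-x};q)_k (cdq^{x+1};q)_k) /
  ((aq;q)_k (bdq;q)_k (cq;q)_k (q;q)_k) q^k`. -/
noncomputable def qRacah (q a b c d : ℝ) (n : ℕ) (x : ℝ) : ℝ :=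
  ∑ k ∈ Finset.range (n + 1),
    qpoch (q ^ (-(n : ℤ))) q k * qpoch (a * b * q ^ (n + 1)) q k *
        qpoch (q ^ (-x)) q k * qpoch (c * d * q ^ (x + 1)) q k /
      (qpoch (a * q) q k * qpoch (b * d * q) q k * qpoch (c * q) q k * qpoch q q k) *
      q ^ k

theorem qpoch_zero (a q : ℝ) : qpoch a q 0 = 1 := by simp [qpoch]

theorem qpoch_succ (a q : ℝ) (k : ℕ) :
    qpoch a q (k + 1) = qpoch a q k * (1 - a * q ^ k) :=
  Finset.prod_range_succ _ _

theorem qpoch_succ' (a q : ℝ) (k : ℕ) :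
    qpoch a q (k + 1) = (1 - a) * qpoch (a * q) q k := by
  simp only [qpoch, Finset.prod_range_succ', pow_zero, mul_one]
  rw [mul_comm]
  congr 1
  exact Finset.prod_congr rfl fun j _ => by ring

theorem qpoch_eq_zero_of_lt {q : ℝ} (hq : q ≠ 0) {n k : ℕ} (h : n < k) :
    qpoch (q ^ (-(n : ℤ))) q k = 0 := by
  refine Finset.prod_eq_zero (Finset.mem_range.2 h) ?_
  rw [zpow_neg, zpow_natCast, inv_mul_cancel₀ (pow_ne_zero _ hq), sub_self]

theorem one_sub_mul_qpoch_mul_succ (a q : ℝ) (k : ℕ) :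
    (1 - a) * qpoch (a * q) q (k + 1) =
      qpoch a q k * (1 - a * q ^ k) * (1 - a * q ^ (k + 1)) := by
  rw [← qpoch_succ', qpoch_succ, qpoch_succ]

theorem zpow_neg_succ_mul {q : ℝ} (hq : q ≠ 0) (n : ℕ) :
    q ^ (-((n + 1 : ℕ) : ℤ)) * q = q ^ (-(n : ℤ)) := by
  rw [← zpow_add_one₀ hq]
  congr 1
  push_cast
  ring

/-- The coefficient of `(q^{-x};q)_k (cdq^{x+1};q)_k` in the `n`-th q-Racah polynomial. -/
noncomputable def qRacahCoeff (q a b c d : ℝ) (n k : ℕ) : ℝ :=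
  qpoch (q ^ (-(n : ℤ))) q k * qpoch (a * b * q ^ (n + 1)) q k /
    (qpoch (a * q) q k * qpoch (b * d * q) q k * qpoch (c * q) q k * qpoch q q k) * q ^ k

theorem qRacahCoeff_zero (q a b c d : ℝ) (n : ℕ) : qRacahCoeff q a b c d n 0 = 1 := by
  simp [qRacahCoeff, qpoch_zero]

theorem qRacahCoeff_eq_zero_of_lt {q : ℝ} (hq : q ≠ 0) (a b c d : ℝ) {n k : ℕ} (h : n < k) :
    qRacahCoeff q a b c d n k = 0 := by
  rw [qRacahCoeff, qpoch_eq_zero_of_lt hq h]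
  simp

theorem qRacah_eq_sum_qRacahCoeff {q : ℝ} (hq : q ≠ 0) (a b c d : ℝ) {n m : ℕ} (h : n < m)
    (x : ℝ) :
    qRacah q a b c d n x = ∑ k ∈ Finset.range m,
      qRacahCoeff q a b c d n k * (qpoch (q ^ (-x)) q k * qpoch (c * d * q ^ (x + 1)) q k) := by
  rw [← Finset.sum_subset (Finset.range_mono (Nat.succ_le_of_lt h))]
  · exact Finset.sum_congr rfl fun k _ => by rw [qRacahCoeff]; ring
  · intro k _ hk
    rw [qRacahCoeff_eq_zero_of_lt hq a b c d (by simpa using hk), zero_mul]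

/-- Multiplication by `X + Y` acts on the basis `(X;q)_k (Y;q)_k` as a bidiagonal operator. -/
theorem add_mul_qpoch_mul_qpoch {q : ℝ} (hq : q ≠ 0) (X Y : ℝ) (k : ℕ) :
    (X + Y) * (qpoch X q k * qpoch Y q k) =
      ((q ^ k)⁻¹ + X * Y * q ^ k) * (qpoch X q k * qpoch Y q k) -
        (q ^ k)⁻¹ * (qpoch X q (k + 1) * qpoch Y q (k + 1)) := by
  have := pow_ne_zero k hq
  rw [qpoch_succ, qpoch_succ]
  field_simp
  ring

/-- The factor shared by the coefficients of neighbouring degrees and indices. -/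
noncomputable def qRacahCommon (q a b c d : ℝ) (n k : ℕ) : ℝ :=
  qpoch (q ^ (-(n : ℤ))) q k * qpoch (a * b * q ^ (n + 1)) q k * q ^ k /
    (qpoch (a * q) q (k + 1) * qpoch (b * d * q) q (k + 1) * qpoch (c * q) q (k + 1) *
      qpoch q q (k + 1))

theorem qRacahCoeff_eq_common {q a b c d : ℝ} (n k : ℕ)
    (ha : qpoch (a * q) q (k + 1) ≠ 0) (hbd : qpoch (b * d * q) q (k + 1) ≠ 0)
    (hc : qpoch (c * q) q (k + 1) ≠ 0) (hqq : qpoch q q (k + 1) ≠ 0) :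
    qRacahCoeff q a b c d n k = qRacahCommon q a b c d n k *
      ((1 - a * q * q ^ k) * (1 - b * d * q * q ^ k) * (1 - c * q * q ^ k) *
        (1 - q * q ^ k)) := by
  rw [qRacahCoeff, qRacahCommon]
  simp only [qpoch_succ] at *
  have a1 := left_ne_zero_of_mul ha
  have a2 := right_ne_zero_of_mul ha
  have b1 := left_ne_zero_of_mul hbd
  have b2 := right_ne_zero_of_mul hbd
  have c1 := left_ne_zero_of_mul hc
  have c2 := right_ne_zero_of_mul hc
  have q1 := left_ne_zero_of_mul hqq
  have q2 := right_ne_zero_of_mul hqq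
  generalize 1 - a * q * q ^ k = x₁ at *
  generalize 1 - b * d * q * q ^ k = x₂ at *
  generalize 1 - c * q * q ^ k = x₃ at *
  generalize 1 - q * q ^ k = x₄ at *
  field_simp

theorem qRacahCoeff_succ {q : ℝ} (hq : q ≠ 0) (a b c d : ℝ) (n k : ℕ) :
    q ^ n * qRacahCoeff q a b c d n (k + 1) = qRacahCommon q a b c d n k *
      ((q ^ n - q ^ k) * (1 - a * b * q ^ n * q * q ^ k) * q) := by
  have hn := pow_ne_zero n hq
  have hu : q ^ n * (1 - q ^ (-(n : ℤ)) * q ^ k) = q ^ n - q ^ k := by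
    rw [zpow_neg, zpow_natCast]
    field_simp
  rw [← hu, qRacahCoeff, qRacahCommon, qpoch_succ (q ^ (-(n : ℤ))),
    qpoch_succ (a * b * q ^ (n + 1))]
  ring

theorem qRacahCoeff_raise {q : ℝ} (hq : q ≠ 0) (a b c d : ℝ) (n k : ℕ) :
    q ^ n * ((1 - a * b * (q ^ n * q)) * qRacahCoeff q a b c d (n + 1) (k + 1)) =
      qRacahCommon q a b c d n k * ((q * q ^ n - 1) * (1 - a * b * q ^ n * q * q ^ k) *
        (1 - a * b * q ^ n * q ^ 2 * q ^ k)) := by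
  have hn := pow_ne_zero n hq
  have hu : q ^ n * (1 - q ^ (-((n + 1 : ℕ) : ℤ))) * q = q * q ^ n - 1 := by
    rw [zpow_neg, zpow_natCast, pow_succ]
    field_simp
  have hv := one_sub_mul_qpoch_mul_succ (a * b * q ^ (n + 1)) q k
  rw [← hu, qRacahCoeff, qRacahCommon, qpoch_succ' (q ^ (-((n + 1 : ℕ) : ℤ))),
    zpow_neg_succ_mul hq]
  rw [show a * b * q ^ (n + 1) * q = a * b * q ^ (n + 1 + 1) by ring] at hv
  linear_combination (q ^ n * (1 - q ^ (-((n + 1 : ℕ) : ℤ))) * qpoch (q ^ (-(n : ℤ))) q k /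
    (qpoch (a * q) q (k + 1) * qpoch (b * d * q) q (k + 1) * qpoch (c * q) q (k + 1) *
      qpoch q q (k + 1)) * q ^ (k + 1)) * hv

theorem qRacahCoeff_lower {q : ℝ} (hq : q ≠ 0) (a b c d : ℝ) (n k : ℕ) :
    q ^ (n + 1) * ((1 - q ^ (n + 1)) * qRacahCoeff q a b c d n (k + 1)) =
      -(qRacahCommon q a b c d (n + 1) k * ((q ^ (n + 1) - q ^ k) * (q ^ (n + 1) - q * q ^ k) *
        (1 - a * b * q ^ (n + 1)) * q)) := by
  have hn := pow_ne_zero (n + 1) hq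
  have hu := one_sub_mul_qpoch_mul_succ (q ^ (-((n + 1 : ℕ) : ℤ))) q k
  rw [zpow_neg_succ_mul hq] at hu
  have hu' : (1 - q ^ (n + 1)) * q ^ (n + 1) * qpoch (q ^ (-(n : ℤ))) q (k + 1) =
      -(qpoch (q ^ (-((n + 1 : ℕ) : ℤ))) q k * (q ^ (n + 1) - q ^ k) *
        (q ^ (n + 1) - q * q ^ k)) := by
    have e : q ^ (-((n + 1 : ℕ) : ℤ)) * q ^ (n + 1) = 1 := by
      rw [zpow_neg, zpow_natCast, inv_mul_cancel₀ hn]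
    generalize q ^ (-((n + 1 : ℕ) : ℤ)) = u at *
    generalize q ^ (n + 1) = N at *
    obtain rfl : u = N⁻¹ := eq_inv_of_mul_eq_one_left e
    rw [pow_succ] at hu
    generalize qpoch (q ^ (-(n : ℤ))) q (k + 1) = P at *
    generalize qpoch N⁻¹ q k = Q at *
    field_simp at hu
    linear_combination (-1 : ℝ) * hu
  rw [qRacahCoeff, qRacahCommon, qpoch_succ' (a * b * q ^ (n + 1)),
    show a * b * q ^ (n + 1) * q = a * b * q ^ (n + 1 + 1) by ring]
  linear_combination ((1 - a * b * q ^ (n + 1)) * qpoch (a * b * q ^ (n + 1 + 1)) q k /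
    (qpoch (a * q) q (k + 1) * qpoch (b * d * q) q (k + 1) * qpoch (c * q) q (k + 1) *
      qpoch q q (k + 1)) * q ^ (k + 1)) * hu'

/-- A coefficientwise recurrence in the basis `(X;q)_k (Y;q)_k`, with `X Y = e`, gives a
recurrence for the sums. -/
theorem add_mul_sum_qpoch {q X Y e A B C : ℝ} (hq : q ≠ 0) (he : X * Y = e) (m : ℕ)
    (t₁ t₂ t₃ : ℕ → ℝ) (ht : t₂ m = 0)
    (hzero : (1 + e) * t₂ 0 = A * t₁ 0 + B * t₂ 0 + C * t₃ 0)
    (hsucc : ∀ k < m, ((q * q ^ k)⁻¹ + e * (q * q ^ k)) * t₂ (k + 1) - (q ^ k)⁻¹ * t₂ k =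
      A * t₁ (k + 1) + B * t₂ (k + 1) + C * t₃ (k + 1)) :
    (X + Y) * ∑ k ∈ Finset.range (m + 1), t₂ k * (qpoch X q k * qpoch Y q k) =
      A * ∑ k ∈ Finset.range (m + 1), t₁ k * (qpoch X q k * qpoch Y q k) +
      B * ∑ k ∈ Finset.range (m + 1), t₂ k * (qpoch X q k * qpoch Y q k) +
      C * ∑ k ∈ Finset.range (m + 1), t₃ k * (qpoch X q k * qpoch Y q k) := by
  have hL : (X + Y) * ∑ k ∈ Finset.range (m + 1), t₂ k * (qpoch X q k * qpoch Y q k) =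
      ∑ k ∈ Finset.range (m + 1),
        ((q ^ k)⁻¹ + e * q ^ k) * t₂ k * (qpoch X q k * qpoch Y q k) -
      ∑ k ∈ Finset.range m,
        (q ^ k)⁻¹ * t₂ k * (qpoch X q (k + 1) * qpoch Y q (k + 1)) := by
    have hm : ∑ k ∈ Finset.range m,
        (q ^ k)⁻¹ * t₂ k * (qpoch X q (k + 1) * qpoch Y q (k + 1)) =
        ∑ k ∈ Finset.range (m + 1),
        (q ^ k)⁻¹ * t₂ k * (qpoch X q (k + 1) * qpoch Y q (k + 1)) := by
      rw [Finset.sum_range_succ, ht]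
      ring
    rw [hm, Finset.mul_sum, ← Finset.sum_sub_distrib]
    refine Finset.sum_congr rfl fun k _ => ?_
    rw [← he]
    linear_combination t₂ k * add_mul_qpoch_mul_qpoch hq X Y k
  rw [hL, Finset.mul_sum, Finset.mul_sum, Finset.mul_sum, ← Finset.sum_add_distrib,
    ← Finset.sum_add_distrib, Finset.sum_range_succ', Finset.sum_range_succ' _ m,
    add_sub_right_comm, ← Finset.sum_sub_distrib]
  congr 1
  · refine Finset.sum_congr rfl fun k hk => ?_
    rw [pow_succ' q k]
    linear_combination
      (qpoch X q (k + 1) * qpoch Y q (k + 1)) * hsucc k (Finset.mem_range.1 hk)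
  · simp only [qpoch_zero, pow_zero, inv_one]
    linear_combination hzero

/-- The rational identity behind the recurrence for the coefficients of positive index. -/
theorem recurrence_identity_succ (q a b c d N J E0 E1 E2 : ℝ) (hq : q ≠ 0) (hJ : J ≠ 0)
    (h0 : E0 ≠ 0) (h1 : E1 ≠ 0)
    (h2 : E2 ≠ 0)
    (e0 : E0 = 1 - a * b * N ^ 2) (e1 : E1 = 1 - a * b * N ^ 2 * q)
    (e2 : E2 = 1 - a * b * N ^ 2 * q ^ 2) :
    ((q * J)⁻¹ + c * d * q * (q * J)) * ((N - J) * (1 - a * b * N * q * J) * q) -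
      J⁻¹ * ((1 - a * q * J) * (1 - b * d * q * J) * (1 - c * q * J) * (1 - q * J)) * N =
     ((1 - a * (N * q)) * (1 - b * d * (N * q)) *
            (1 - c * (N * q)) /
          (E1 * E2)) *
          ((q * N - 1) * (1 - a * b * N * q * J) * (1 - a * b * N * q ^ 2 * J)) +
        (N * q * (a * b * (N ^ 2 * q) + 1) *
              (c + b * c * d + d * c + a + b * d + a * b + c * a + a * b * d) /
            (E0 * E2) -
          N ^ 2 * q * (1 + q) *
              (a * b ^ 2 * d + a * b * c * d + c * a + b * c * d + a * b * d + a * b +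
                a * b * c + a ^ 2 * b) /
            (E0 * E2)) *
          (q * (N - J) * (1 - a * b * N * q * J)) -
        (q * (1 - b * N) * (c - a * b * N) * (d - a * N) /
            (E0 * E1)) *
          ((N - J) * (N - q * J) * (1 - a * b * N) * q) := by
  field_simp
  rw [e0, e1, e2]
  ring

/-- The rational identity behind the recurrence for the coefficient of index zero. -/
theorem recurrence_identity_zero (q a b c d N E0 E1 E2 : ℝ)
    (h0 : E0 ≠ 0) (h1 : E1 ≠ 0)
    (h2 : E2 ≠ 0)
    (e0 : E0 = 1 - a * b * N ^ 2) (e1 : E1 = 1 - a * b * N ^ 2 * q)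
    (e2 : E2 = 1 - a * b * N ^ 2 * q ^ 2) :
    1 + c * d * q =
     ((1 - a * (N * q)) * (1 - a * b * (N * q)) * (1 - b * d * (N * q)) *
            (1 - c * (N * q)) /
          (E1 * E2)) +
        (N * q * (a * b * (N ^ 2 * q) + 1) *
              (c + b * c * d + d * c + a + b * d + a * b + c * a + a * b * d) /
            (E0 * E2) -
          N ^ 2 * q * (1 + q) *
              (a * b ^ 2 * d + a * b * c * d + c * a + b * c * d + a * b * d + a * b +
                a * b * c + a ^ 2 * b) /
            (E0 * E2)) +
        (q * (1 - N) * (1 - b * N) * (c - a * b * N) * (d - a * N) /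
            (E0 * E1)) := by
  field_simp
  rw [e0, e1, e2]
  ring

theorem qRacah_three_term (n : ℕ) (hn : 1 ≤ n) (q a b c d : ℝ) (hq : 0 < q) (x : ℝ)
    (haq : ∀ k ≤ n + 1, qpoch (a * q) q k ≠ 0)
    (hbdq : ∀ k ≤ n + 1, qpoch (b * d * q) q k ≠ 0)
    (hcq : ∀ k ≤ n + 1, qpoch (c * q) q k ≠ 0)
    (hqq : ∀ k ≤ n + 1, qpoch q q k ≠ 0)
    (h0 : 1 - a * b * q ^ (2 * n) ≠ 0)
    (h1 : 1 - a * b * q ^ (2 * n + 1) ≠ 0)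
    (h2 : 1 - a * b * q ^ (2 * n + 2) ≠ 0) :
    (q ^ (-x) + c * d * q ^ (x + 1)) * qRacah q a b c d n x =
      ((1 - a * q ^ (n + 1)) * (1 - a * b * q ^ (n + 1)) * (1 - b * d * q ^ (n + 1)) *
            (1 - c * q ^ (n + 1)) /
          ((1 - a * b * q ^ (2 * n + 1)) * (1 - a * b * q ^ (2 * n + 2)))) *
          qRacah q a b c d (n + 1) x +
        (q ^ (n + 1) * (a * b * q ^ (2 * n + 1) + 1) *
              (c + b * c * d + d * c + a + b * d + a * b + c * a + a * b * d) /
            ((1 - a * b * q ^ (2 * n)) * (1 - a * b * q ^ (2 * n + 2))) -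
          q ^ (2 * n + 1) * (1 + q) *
              (a * b ^ 2 * d + a * b * c * d + c * a + b * c * d + a * b * d + a * b +
                a * b * c + a ^ 2 * b) /
            ((1 - a * b * q ^ (2 * n)) * (1 - a * b * q ^ (2 * n + 2)))) *
          qRacah q a b c d n x +
        (q * (1 - q ^ n) * (1 - b * q ^ n) * (c - a * b * q ^ n) * (d - a * q ^ n) /
            ((1 - a * b * q ^ (2 * n)) * (1 - a * b * q ^ (2 * n + 1)))) *
          qRacah q a b c d (n - 1) x := by
  obtain ⟨m, rfl⟩ : ∃ m, n = m + 1 := ⟨n - 1, by omega⟩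
  have hq0 := hq.ne'
  have hXY : q ^ (-x) * (c * d * q ^ (x + 1)) = c * d * q := by
    rw [mul_left_comm, ← Real.rpow_add hq]
    simp
  have p0 : q ^ (2 * (m + 1)) = (q ^ (m + 1)) ^ 2 := by ring
  have p1 : q ^ (2 * (m + 1) + 1) = (q ^ (m + 1)) ^ 2 * q := by ring
  have p2 : q ^ (2 * (m + 1) + 2) = (q ^ (m + 1)) ^ 2 * q ^ 2 := by ring
  rw [p0] at h0
  rw [p1] at h1
  rw [p2] at h2
  rw [p0, p1, p2, pow_succ q (m + 1), Nat.add_sub_cancel,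
    qRacah_eq_sum_qRacahCoeff hq0 a b c d (show m + 1 < m + 1 + 1 + 1 by omega),
    qRacah_eq_sum_qRacahCoeff hq0 a b c d (show m + 1 + 1 < m + 1 + 1 + 1 by omega),
    qRacah_eq_sum_qRacahCoeff hq0 a b c d (show m < m + 1 + 1 + 1 by omega)]
  refine add_mul_sum_qpoch hq0 hXY (m + 1 + 1) _ _ _
    (qRacahCoeff_eq_zero_of_lt hq0 a b c d (by omega)) ?_ fun k hk => ?_
  · simp only [qRacahCoeff_zero, mul_one]
    refine recurrence_identity_zero q a b c d (q ^ (m + 1)) _ _ _ h0 h1 h2 ?_ ?_ ?_ <;> ring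
  · have hN := pow_ne_zero (m + 1) hq0
    have hJ := pow_ne_zero k hq0
    have t0 := qRacahCoeff_eq_common (m + 1) k (haq _ (by omega)) (hbdq _ (by omega))
      (hcq _ (by omega)) (hqq _ (by omega))
    have t1 := qRacahCoeff_succ hq0 a b c d (m + 1) k
    have t2 := qRacahCoeff_raise hq0 a b c d (m + 1) k
    have t3 := qRacahCoeff_lower hq0 a b c d m k
    have key := recurrence_identity_succ q a b c d (q ^ (m + 1)) (q ^ k) _ _ _ hq0 hJ
      h0 h1 h2 (by ring) (by ring) (by ring)
    refine mul_left_cancel₀ hN ?_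
    generalize q ^ (m + 1) = N at *
    generalize q ^ k = J at *
    generalize 1 - a * b * N ^ 2 = E₀ at *
    generalize 1 - a * b * (N ^ 2 * q) = E₁ at *
    generalize 1 - a * b * (N ^ 2 * q ^ 2) = E₂ at *
    linear_combination qRacahCommon q a b c d (m + 1) k * key +
      ((q * J)⁻¹ + c * d * q * (q * J)) * t1 - J⁻¹ * N * t0 -
      ((1 - a * (N * q)) * (1 - b * d * (N * q)) * (1 - c * (N * q)) / (E₁ * E₂)) * t2 -
      (N * q * (a * b * (N ^ 2 * q) + 1) *
            (c + b * c * d + d * c + a + b * d + a * b + c * a + a * b * d) / (E₀ * E₂) -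
          N ^ 2 * q * (1 + q) *
            (a * b ^ 2 * d + a * b * c * d + c * a + b * c * d + a * b * d + a * b +
              a * b * c + a ^ 2 * b) / (E₀ * E₂)) * t1 -
      (q * (1 - b * N) * (c - a * b * N) * (d - a * N) / (E₀ * E₁)) * t3
end
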